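/- For every Lusztig datum a ∈ ℬ and every 1 ≤ i ≤ n: M_K(f̃_i^* a) = M_K(a) for every K ∈ M_n^× with i ∈ K or i+1 ∉ K, and M_{[i+1,n+1]}(f̃_i^* a) = M_{[i+1,n+1]}(a) − 1. (Hence Ψ intertwines f̃_i^* on ℬ with the lowering Kashiwara operator on e-BZ data.) -/

import Mathlib

/-- The set of Lusztig data: `a : Π → ℤ_{≥0}`, modeled as an integer-valued function on
`ℤ × ℤ` that is nonnegative everywhere and vanishes off `Π = {(k,l) : 1 ≤ k < l ≤ n+1}`. -/
def IsLusztig (n : ℕ) (a : ℤ → ℤ → ℤ) : Prop :=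
  (∀ k l : ℤ, 0 ≤ a k l) ∧ ∀ k l : ℤ, ¬(1 ≤ k ∧ k < l ∧ l ≤ (n : ℤ) + 1) → a k l = 0

/-- The `p`-th smallest element (1-indexed) `k_p` of a Maya diagram `K`. -/
def kth (K : Finset ℕ) (p : ℕ) : ℕ := (K.sort (· ≤ ·)).getD (p - 1) 0

/-- `C = (c_{p,q})_{1 ≤ p ≤ q ≤ l}` (with `l = |K|`) is a `K`-tableau: an upper-triangular
integer matrix with `c_{p,p} = k_p`, `c_{p,q} ≤ c_{p,q+1}` and `c_{p,q} < c_{p+1,q}`. -/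
def IsKTab (K : Finset ℕ) (c : ℕ → ℕ → ℤ) : Prop :=
  (∀ p : ℕ, 1 ≤ p → p ≤ K.card → c p p = (kth K p : ℤ)) ∧
  (∀ p q : ℕ, 1 ≤ p → p ≤ q → q + 1 ≤ K.card → c p q ≤ c p (q + 1)) ∧
  (∀ p q : ℕ, 1 ≤ p → p + 1 ≤ q → q ≤ K.card → c p q < c (p + 1) q)

/-- `Σ_{1 ≤ p < q ≤ l} a_{c_{p,q}, c_{p,q}+(q−p)}`. -/
def tabSum (a : ℤ → ℤ → ℤ) (K : Finset ℕ) (c : ℕ → ℕ → ℤ) : ℤ :=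
  ∑ p ∈ Finset.Icc 1 K.card, ∑ q ∈ Finset.Icc (p + 1) K.card,
    a (c p q) (c p q + ((q : ℤ) - (p : ℤ)))

/-- `M_K(a) = −Σ_{j=1}^{l} Σ_{i=1}^{k_j−1} a_{i,k_j} + min{ tabSum over K-tableaux }`,
for `K ∈ M_n^×`, with the conventions `M_∅(a) = M_{[1,n+1]}(a) = 0`. -/
noncomputable def MK (n : ℕ) (a : ℤ → ℤ → ℤ) (K : Finset ℕ) : ℤ :=
  if K = ∅ ∨ K = Finset.Icc 1 (n + 1) then 0
  else
    -(∑ k ∈ K, ∑ s ∈ Finset.Icc 1 (k - 1), a (s : ℤ) (k : ℤ)) +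
      sInf {z : ℤ | ∃ c : ℕ → ℕ → ℤ, IsKTab K c ∧ z = tabSum a K c}
/-- `A_l^{*(i)}(a) = Σ_{t=l+1}^{n+1} (a_{i,t} − a_{i+1,t+1})`. -/
def Astar (n : ℕ) (a : ℤ → ℤ → ℤ) (i l : ℕ) : ℤ :=
  ∑ t ∈ Finset.Icc (l + 1) (n + 1), (a (i : ℤ) (t : ℤ) - a ((i : ℤ) + 1) ((t : ℤ) + 1))

/-- `ε_i^*(a) = max{A_i^{*(i)}(a),…,A_n^{*(i)}(a)}`. -/
def epsStar (n : ℕ) (a : ℤ → ℤ → ℤ) (i : ℕ) : ℤ :=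
  ((Finset.Icc i n).image (Astar n a i)).max.unbotD 0

/-- `l_f(a,i)`: the minimal `l ∈ [i,n]` with `A_l^{*(i)}(a) = ε_i^*(a)`. -/
def lfStar (n : ℕ) (a : ℤ → ℤ → ℤ) (i : ℕ) : ℕ :=
  (((Finset.Icc i n).filter fun l => Astar n a i l = epsStar n a i).min).untopD 0

/-- `l_e(a,i)`: the maximal `l ∈ [i,n]` with `A_l^{*(i)}(a) = ε_i^*(a)`. -/
def leStar (n : ℕ) (a : ℤ → ℤ → ℤ) (i : ℕ) : ℕ :=
  (((Finset.Icc i n).filter fun l => Astar n a i l = epsStar n a i).max).unbotD 0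

/-- The operator `f̃_i^*`: increase `a_{i,l_f+1}` by 1 and decrease `a_{i+1,l_f+1}` by 1
(the latter discarded when `l_f = i`, the entry `(i+1,i+1)` being out of range). -/
def ftilStar (n : ℕ) (a : ℤ → ℤ → ℤ) (i : ℕ) : ℤ → ℤ → ℤ := fun k l =>
  if k = (i : ℤ) ∧ l = (lfStar n a i : ℤ) + 1 then a k l + 1
  else if k = (i : ℤ) + 1 ∧ l = (lfStar n a i : ℤ) + 1 ∧ (i : ℤ) < (lfStar n a i : ℤ) then
    a k l - 1
  else a k l

/-- The operator `ẽ_i^*` (for `ε_i^*(a) > 0`): decrease `a_{i,l_e+1}` by 1 and increase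
`a_{i+1,l_e+1}` by 1 (the latter discarded when `l_e = i`). -/
def etilStar (n : ℕ) (a : ℤ → ℤ → ℤ) (i : ℕ) : ℤ → ℤ → ℤ := fun k l =>
  if k = (i : ℤ) ∧ l = (leStar n a i : ℤ) + 1 then a k l - 1
  else if k = (i : ℤ) + 1 ∧ l = (leStar n a i : ℤ) + 1 ∧ (i : ℤ) < (leStar n a i : ℤ) then
    a k l + 1
  else a k l

/-!
For a `K`-tableau `c` put `cost a c = -Σ_{k ∈ K} Σ_s a_{s,k} + Σ_{p<q} a_{c_{p,q}, c_{p,q}+q-p}`,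
so that `M_K(a)` is the minimum of `cost a`. Values increase strictly along each diagonal
`q - p = d` of `c`, hence each value occurs there at most once. Writing `l_f = i + d`, the operator
`f̃_i^*` therefore changes the cost of `c` by `+1` if `i` occurs on diagonal `d + 1` and by `-1` if
`i + 1` occurs on diagonal `d`.

If only the first happens, the entries `i` from diagonal `d + 1` onwards in their row can be
raised to `i + 1`; this changes `cost a` by `A_l - A_{l_f} ≤ 0` for some `l ≥ l_f` and removes the
`+1`. If only the second happens and `i ∈ K` or `i + 1 ∉ K`, the entries `i + 1` up to diagonal `d`
in their row can be lowered to `i`; this changes `cost a` by `A_l - A_{l_f}` for some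
`i ≤ l < l_f`, which is at most `-1` because `l_f` is the first maximiser. So the two minima agree.

For `K = [i+1, n+1]` the only tableau is `c_{p,q} = i + p`, for which exactly the second happens.
-/

open Finset

theorem kth_eq_orderEmbOfFin (K : Finset ℕ) (j : Fin K.card) :
    kth K (j + 1) = K.orderEmbOfFin rfl j := by
  have hj : (j : ℕ) < (K.sort (· ≤ ·)).length := by simp
  rw [kth, Nat.add_sub_cancel, List.getD_eq_getElem _ _ hj, orderEmbOfFin_apply]
  rfl

theorem strictMonoOn_kth (K : Finset ℕ) : StrictMonoOn (kth K) (Set.Icc 1 K.card) := by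
  refine strictMonoOn_of_lt_add_one Set.ordConnected_Icc fun p _ hp hp' ↦ ?_
  obtain ⟨j, rfl⟩ := Nat.exists_eq_add_of_le' hp.1
  have hlt : j + 1 < K.card := hp'.2
  rw [kth_eq_orderEmbOfFin K ⟨j, by omega⟩, kth_eq_orderEmbOfFin K ⟨j + 1, hlt⟩]
  exact (K.orderEmbOfFin rfl).strictMono (by simp)

theorem mem_iff_exists_kth_eq {K : Finset ℕ} {x : ℕ} :
    x ∈ K ↔ ∃ p, 1 ≤ p ∧ p ≤ K.card ∧ kth K p = x := by
  rw [← mem_coe, ← range_orderEmbOfFin K rfl]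
  constructor
  · rintro ⟨j, rfl⟩
    exact ⟨j + 1, by omega, j.2, kth_eq_orderEmbOfFin K j⟩
  · rintro ⟨p, hp1, hpK, rfl⟩
    obtain ⟨j, rfl⟩ := Nat.exists_eq_add_of_le' hp1
    exact ⟨⟨j, hpK⟩, (kth_eq_orderEmbOfFin K ⟨j, hpK⟩).symm⟩

theorem kth_Icc {m N p : ℕ} (hp1 : 1 ≤ p) (hp : m + p ≤ N) : kth (Icc (m + 1) N) p = m + p := by
  have hcard : (Icc (m + 1) N).card = N - m := by rw [Nat.card_Icc]; omega
  obtain ⟨j, rfl⟩ := Nat.exists_eq_add_of_le' hp1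
  have hunique := orderEmbOfFin_unique (s := Icc (m + 1) N) rfl
    (f := fun j ↦ m + (j + 1)) (fun j ↦ mem_Icc.2 (by omega)) fun _ _ h ↦ by
      simpa using h
  rw [kth_eq_orderEmbOfFin _ ⟨j, by omega⟩, ← hunique]

/-! ### Tableaux -/

theorem isKTab_kth (K : Finset ℕ) : IsKTab K fun p _ ↦ kth K p :=
  ⟨fun _ _ _ ↦ rfl, fun _ _ _ _ _ ↦ le_rfl, fun p _ hp _ _ ↦
    Nat.cast_lt.2 (strictMonoOn_kth K ⟨hp, by omega⟩ ⟨by omega, by omega⟩ p.lt_succ_self)⟩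

namespace IsKTab

variable {K : Finset ℕ} {c : ℕ → ℕ → ℤ} {p q r : ℕ}

theorem row_le (hc : IsKTab K c) (hp : 1 ≤ p) (hpq : p ≤ q) (hqr : q ≤ r) (hr : r ≤ K.card) :
    c p q ≤ c p r := by
  induction r, hqr using Nat.le_induction with
  | base => rfl
  | succ r hqr ih => exact (ih (by omega)).trans (hc.2.1 p r hp (by omega) hr)

theorem add_le_col (hc : IsKTab K c) (hp : 1 ≤ p) (hpr : p ≤ r) (hrq : r ≤ q) (hq : q ≤ K.card) :
    c p q + (r - p) ≤ c r q := by
  induction r, hpr using Nat.le_induction with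
  | base => simp
  | succ r hpr ih =>
    have hstep := hc.2.2 r q (by omega) hrq hq
    have hprev := ih (by omega)
    push_cast
    omega

theorem strictMonoOn_diag (hc : IsKTab K c) (d : ℕ) :
    StrictMonoOn (fun p ↦ c p (p + d)) {p | 1 ≤ p ∧ p + d ≤ K.card} := by
  rintro p ⟨hp, -⟩ r ⟨-, hr⟩ hpr
  have hrow := hc.row_le hp (q := p + d) (r := r + d) (by omega) (by omega) hr
  have hcol := hc.add_le_col hp hpr.le (q := r + d) (by omega) hr
  dsimp only
  omega

theorem eq_add_of_Icc {m N : ℕ} (hc : IsKTab (Icc (m + 1) N) c) (hp : 1 ≤ p) (hpq : p ≤ q)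
    (hq : m + q ≤ N) : c p q = m + p := by
  have hcard : (Icc (m + 1) N).card = N - m := by rw [Nat.card_Icc]; omega
  have hlower := hc.row_le hp le_rfl hpq (by omega)
  have hupper := hc.add_le_col hp hpq le_rfl (by omega)
  rw [hc.1 p hp (by omega), kth_Icc hp (by omega)] at hlower
  rw [hc.1 q (by omega) (by omega), kth_Icc (by omega) hq] at hupper
  push_cast at hlower hupper
  omega

end IsKTab

/-- The set of values on the `d`-th diagonal `c_{1,1+d}, c_{2,2+d}, …` of a `K`-tableau `c`; the
range of rows is empty when `d ≥ |K|`. -/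
def tabDiag (K : Finset ℕ) (c : ℕ → ℕ → ℤ) (d : ℕ) : Finset ℤ :=
  (Icc 1 (K.card - d)).image fun p ↦ c p (p + d)

theorem mem_tabDiag {K : Finset ℕ} {c : ℕ → ℕ → ℤ} {d : ℕ} {v : ℤ} :
    v ∈ tabDiag K c d ↔ ∃ p, 1 ≤ p ∧ p + d ≤ K.card ∧ c p (p + d) = v := by
  rw [tabDiag, mem_image]
  refine exists_congr fun p ↦ ?_
  rw [mem_Icc, ← and_assoc]
  exact and_congr_left fun _ ↦ by omega

theorem IsKTab.natCast_mem_tabDiag_zero {K : Finset ℕ} {c : ℕ → ℕ → ℤ} (hc : IsKTab K c) {x : ℕ} :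
    (x : ℤ) ∈ tabDiag K c 0 ↔ x ∈ K := by
  rw [mem_tabDiag, mem_iff_exists_kth_eq]
  refine exists_congr fun p ↦ and_congr_right fun hp ↦ and_congr_right fun hpK ↦ ?_
  rw [add_zero, hc.1 p hp hpK, Nat.cast_inj]

theorem IsKTab.tabSum_eq_sum_tabDiag {K : Finset ℕ} {c : ℕ → ℕ → ℤ} (hc : IsKTab K c)
    (a : ℤ → ℤ → ℤ) :
    tabSum a K c = ∑ d ∈ Icc 1 K.card, ∑ v ∈ tabDiag K c d, a v (v + d) := by
  have hdiag : ∀ d ∈ Icc 1 K.card, ∑ v ∈ tabDiag K c d, a v (v + d) =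
      ∑ p ∈ Icc 1 (K.card - d), a (c p (p + d)) (c p (p + d) + d) := by
    intro d hd
    refine sum_image ((hc.strictMonoOn_diag d).injOn.mono fun p hp ↦ ?_)
    simp only [coe_Icc, Set.mem_Icc, mem_Icc, Set.mem_ofPred_eq] at hp hd ⊢
    omega
  rw [tabSum, sum_congr rfl hdiag, sum_sigma', sum_sigma']
  refine sum_nbij' (fun x ↦ ⟨x.2 - x.1, x.1⟩) (fun y ↦ ⟨y.2, y.2 + y.1⟩) ?_ ?_ ?_ ?_ ?_ <;>
    rintro ⟨s, t⟩ hst <;> simp only [mem_sigma, mem_Icc] at hst ⊢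
  · omega
  · omega
  · rw [Nat.add_sub_cancel' (by omega)]
  · rw [Nat.add_sub_cancel_left]
  · rw [Nat.add_sub_cancel' (by omega), Nat.cast_sub (by omega)]

/-! ### The cost of a tableau -/

/-- The linear part `Σ_{k ∈ K} Σ_{s=1}^{k-1} a_{s,k}` of `M_K(a)`. -/
def columnSum (a : ℤ → ℤ → ℤ) (K : Finset ℕ) : ℤ :=
  ∑ k ∈ K, ∑ s ∈ Icc 1 (k - 1), a (s : ℤ) (k : ℤ)

/-- The quantity attached to a `K`-tableau `c` whose minimum over all `c` is `M_K(a)`. -/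
def tabCost (a : ℤ → ℤ → ℤ) (K : Finset ℕ) (c : ℕ → ℕ → ℤ) : ℤ :=
  -columnSum a K + tabSum a K c

theorem tabCost_add (a b : ℤ → ℤ → ℤ) (K : Finset ℕ) (c : ℕ → ℕ → ℤ) :
    tabCost (a + b) K c = tabCost a K c + tabCost b K c := by
  simp only [tabCost, columnSum, tabSum, Pi.add_apply, sum_add_distrib]
  ring

theorem tabCost_sub (a b : ℤ → ℤ → ℤ) (K : Finset ℕ) (c : ℕ → ℕ → ℤ) :
    tabCost (a - b) K c = tabCost a K c - tabCost b K c := by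
  rw [eq_sub_iff_add_eq, ← tabCost_add, sub_add_cancel]

theorem isLeast_MK (n : ℕ) {a : ℤ → ℤ → ℤ} (ha : 0 ≤ a) {K : Finset ℕ} (hK : K ≠ ∅)
    (hK' : K ≠ Icc 1 (n + 1)) : IsLeast (tabCost a K '' {c | IsKTab K c}) (MK n a K) := by
  set sums : Set ℤ := {z | ∃ c, IsKTab K c ∧ z = tabSum a K c}
  have hMK : MK n a K = -columnSum a K + sInf sums := if_neg (by tauto)
  have hbdd : BddBelow sums := ⟨0, by
    rintro _ ⟨c, -, rfl⟩
    exact sum_nonneg fun _ _ ↦ sum_nonneg fun _ _ ↦ ha _ _⟩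
  rw [hMK]
  constructor
  · obtain ⟨c, hc, hmin⟩ := Int.csInf_mem (s := sums) ⟨_, _, isKTab_kth K, rfl⟩ hbdd
    exact ⟨c, hc, by rw [hmin, tabCost]⟩
  · rintro _ ⟨c, hc, rfl⟩
    exact add_le_add_right (csInf_le hbdd ⟨c, hc, rfl⟩) _

theorem MK_le_MK (n : ℕ) {a b : ℤ → ℤ → ℤ} (ha : 0 ≤ a) (hb : 0 ≤ b) {K : Finset ℕ}
    (h : ∀ c, IsKTab K c → ∃ c', IsKTab K c' ∧ tabCost a K c' ≤ tabCost b K c) :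
    MK n a K ≤ MK n b K := by
  by_cases hK : K = ∅ ∨ K = Icc 1 (n + 1)
  · rw [MK, MK, if_pos hK, if_pos hK]
  · obtain ⟨hne, hne'⟩ := not_or.1 hK
    obtain ⟨c, hc, hmin⟩ := (isLeast_MK n hb hne hne').1
    obtain ⟨c', hc', hle⟩ := h c hc
    exact ((isLeast_MK n ha hne hne').2 ⟨c', hc', rfl⟩).trans (hle.trans hmin.le)

/-- The array with a single nonzero entry `1`, in position `(k, l)`. -/
def unitEntry (k l : ℤ) : ℤ → ℤ → ℤ := fun x y ↦ if x = k ∧ y = l then 1 else 0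

theorem columnSum_unitEntry (K : Finset ℕ) {s k : ℕ} (hs : 1 ≤ s) (hsk : s < k) :
    columnSum (unitEntry s k) K = if k ∈ K then 1 else 0 := by
  have hcolumn : ∀ x : ℕ, ∑ y ∈ Icc 1 (x - 1), unitEntry s k y x = if k = x then 1 else 0 := by
    intro x
    by_cases hx : k = x
    · subst hx
      simp only [unitEntry, Nat.cast_inj, and_true, if_true, sum_ite_eq', mem_Icc]
      exact if_pos (by omega)
    · simp [unitEntry, hx, Ne.symm hx]
  simp only [columnSum, hcolumn, sum_ite_eq]

theorem IsKTab.tabSum_unitEntry {K : Finset ℕ} {c : ℕ → ℕ → ℤ} (hc : IsKTab K c) (v : ℤ) {d : ℕ}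
    (hd : 1 ≤ d) : tabSum (unitEntry v (v + d)) K c = if v ∈ tabDiag K c d then 1 else 0 := by
  have hdiag : ∀ e : ℕ, ∑ w ∈ tabDiag K c e, unitEntry v (v + d) w (w + e) =
      if d = e then if v ∈ tabDiag K c d then 1 else 0 else 0 := by
    intro e
    by_cases hde : d = e
    · subst hde
      simp +contextual [unitEntry]
    · rw [if_neg hde]
      exact sum_eq_zero fun w _ ↦ if_neg (by omega)
  simp only [hc.tabSum_eq_sum_tabDiag, hdiag, sum_ite_eq, mem_Icc]
  rw [← ite_and]
  refine if_congr (and_iff_right_of_imp fun hv ↦ ?_) rfl rfl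
  obtain ⟨p, -, hp, -⟩ := mem_tabDiag.1 hv
  omega

theorem IsKTab.tabCost_unitEntry {K : Finset ℕ} {c : ℕ → ℕ → ℤ} (hc : IsKTab K c) {s d : ℕ}
    (hs : 1 ≤ s) (hd : 1 ≤ d) :
    tabCost (unitEntry s (s + d)) K c =
      -(if s + d ∈ K then 1 else 0) + if (s : ℤ) ∈ tabDiag K c d then 1 else 0 := by
  have hcolumn := columnSum_unitEntry K hs (show s < s + d by omega)
  push_cast at hcolumn
  rw [tabCost, hcolumn, hc.tabSum_unitEntry _ hd]

/-! ### Changing a run of entries in a row -/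

/-- The array `c` with the entries in row `p` and on diagonals `d + 1, …, e` replaced by `v`. -/
def setRun (c : ℕ → ℕ → ℤ) (p d e : ℕ) (v : ℤ) : ℕ → ℕ → ℤ := fun r q ↦
  if r = p ∧ p + d < q ∧ q ≤ p + e then v else c r q

section setRun

variable {K : Finset ℕ} {c : ℕ → ℕ → ℤ} {p d e : ℕ} {v : ℤ}

theorem IsKTab.isKTab_setRun (hc : IsKTab K c) (hp : 1 ≤ p) (he : p + e ≤ K.card)
    (hleft : c p (p + d) ≤ v) (hright : p + e + 1 ≤ K.card → v ≤ c p (p + e + 1))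
    (habove : ∀ r, 1 ≤ r → r + 1 = p → c r (p + e) < v) (hbelow : v < c (p + 1) (p + d + 1)) :
    IsKTab K (setRun c p d e v) := by
  refine ⟨fun r hr hrK ↦ ?_, fun r q hr hrq hq ↦ ?_, fun r q hr hrq hq ↦ ?_⟩
  · rw [setRun, if_neg (by omega), hc.1 r hr hrK]
  · have hrow := hc.2.1 r q hr hrq hq
    unfold setRun
    split_ifs with hcur hnext hnext
    · rfl
    · obtain ⟨rfl, hdq, hqe⟩ := hcur
      obtain rfl : q = r + e := by omega
      exact hright hq
    · obtain ⟨rfl, hdq, hqe⟩ := hnext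
      obtain rfl : q = r + d := by omega
      exact hleft
    · exact hrow
  · have hcol := hc.2.2 r q hr hrq hq
    unfold setRun
    split_ifs with hcur hnext hnext
    · omega
    · obtain ⟨rfl, hdq, -⟩ := hcur
      exact hbelow.trans_le (hc.row_le (by omega) (by omega) hdq hq)
    · exact (hc.row_le hr (by omega) hnext.2.2 he).trans_lt (habove r hr hnext.1)
    · exact hcol

theorem IsKTab.notMem_tabDiag_setRun (hc : IsKTab K c) {u : ℤ} (huv : u ≠ v) (hp : 1 ≤ p) {j : ℕ}
    (hjK : p + j ≤ K.card) (hj : j ∈ Ioc d e) (hu : c p (p + j) = u) :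
    u ∉ tabDiag K (setRun c p d e v) j := by
  intro hmem
  obtain ⟨r, hr, hrK, hru⟩ := mem_tabDiag.1 hmem
  rw [mem_Ioc] at hj
  unfold setRun at hru
  split_ifs at hru with hrun
  · exact huv hru.symm
  · obtain rfl : r = p := (hc.strictMonoOn_diag j).injOn ⟨hr, hrK⟩ ⟨hp, hjK⟩ (hru.trans hu.symm)
    omega

theorem tabSum_setRun (a : ℤ → ℤ → ℤ) {u : ℤ} (hp : 1 ≤ p) (he : p + e ≤ K.card)
    (hu : ∀ j ∈ Ioc d e, c p (p + j) = u) :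
    tabSum a K (setRun c p d e v) =
      tabSum a K c + ∑ j ∈ Ioc d e, (a v (v + j) - a u (u + j)) := by
  have hpK : p ∈ Icc 1 K.card := mem_Icc.2 (by omega)
  rw [← sub_eq_iff_eq_add', tabSum, tabSum, ← sum_sub_distrib, sum_eq_single_of_mem p hpK]
  · rw [← sum_sub_distrib]
    refine (sum_of_injOn (p + ·) (add_right_injective p).injOn (fun j hj ↦ ?_)
      (fun q _ hq ↦ ?_) fun j hj ↦ ?_).symm
    · simp only [coe_Ioc, Set.mem_Ioc, coe_Icc, Set.mem_Icc] at hj ⊢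
      omega
    · have hout : ¬(p = p ∧ p + d < q ∧ q ≤ p + e) := fun h ↦
        hq ⟨q - p, by simp only [coe_Ioc, Set.mem_Ioc]; omega, by dsimp only; omega⟩
      rw [setRun, if_neg hout, sub_self]
    · have hrun := mem_Ioc.1 hj
      rw [setRun, if_pos (by omega), hu j hj, Nat.cast_add, add_sub_cancel_left]
  · intro r _ hr
    simp only [setRun, hr, false_and, if_false, sub_self]

end setRun

section existence

variable {K : Finset ℕ} {c : ℕ → ℕ → ℤ} {d : ℕ}

theorem IsKTab.exists_setRun_succ (hc : IsKTab K c) {v : ℤ} (hv : v ∈ tabDiag K c (d + 1))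
    (hv' : v + 1 ∉ tabDiag K c d) :
    ∃ p e, 1 ≤ p ∧ d < e ∧ p + e ≤ K.card ∧ (∀ j ∈ Ioc d e, c p (p + j) = v) ∧
      IsKTab K (setRun c p d e (v + 1)) := by
  obtain ⟨p, hp, hpd, hcv⟩ := mem_tabDiag.1 hv
  set e := Nat.findGreatest (fun j ↦ p + j ≤ K.card ∧ c p (p + j) = v) K.card
  have hde : d + 1 ≤ e := Nat.le_findGreatest (by omega) ⟨hpd, hcv⟩
  obtain ⟨heK, hev⟩ : p + e ≤ K.card ∧ c p (p + e) = v :=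
    Nat.findGreatest_spec (P := fun j ↦ p + j ≤ K.card ∧ c p (p + j) = v) (m := d + 1)
      (by omega) ⟨hpd, hcv⟩
  have hrun : ∀ j ∈ Ioc d e, c p (p + j) = v := fun j hj ↦ by
    rw [mem_Ioc] at hj
    have hupper := hc.row_le hp (q := p + j) (r := p + e) (by omega) (by omega) heK
    have hlower := hc.row_le hp (q := p + (d + 1)) (r := p + j) (by omega) (by omega) (by omega)
    omega
  refine ⟨p, e, hp, hde, heK, hrun,
    hc.isKTab_setRun hp heK ?_ (fun hright ↦ ?_) (fun r hr hrp ↦ ?_) ?_⟩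
  · have hrow := hc.row_le hp (q := p + d) (r := p + (d + 1)) (by omega) (by omega) hpd
    omega
  · have hmax : ¬(p + (e + 1) ≤ K.card ∧ c p (p + (e + 1)) = v) :=
      Nat.findGreatest_is_greatest (Nat.lt_succ_self e) (by omega)
    have hrow := hc.2.1 p (p + e) hp (by omega) hright
    have hne : c p (p + e + 1) ≠ v := fun h ↦ hmax ⟨hright, h⟩
    omega
  · have hcol := hc.add_le_col hr (q := p + e) (r := p) (by omega) (by omega) heK
    omega
  · have hcol := hc.2.2 p (p + (d + 1)) hp (by omega) hpd
    have hne : c (p + 1) (p + (d + 1)) ≠ v + 1 := fun h ↦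
      hv' (mem_tabDiag.2 ⟨p + 1, by omega, by omega, by rw [← h]; congr 1; omega⟩)
    rw [← add_assoc] at hcol hcv hne
    omega

theorem IsKTab.apply_self_ne_succ (hc : IsKTab K c) {i : ℕ} (hK : i ∈ K ∨ i + 1 ∉ K)
    (hi : (i : ℤ) ∉ tabDiag K c (d + 1)) {p : ℕ} (hp : 1 ≤ p) (hpd : p + d ≤ K.card)
    (hcp : c p (p + d) = i + 1) : c p p ≠ i + 1 := by
  intro hpp
  have hsucc : i + 1 ∈ K :=
    hc.natCast_mem_tabDiag_zero.1 (mem_tabDiag.2 ⟨p, hp, by omega, by exact_mod_cast hpp⟩)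
  obtain ⟨r, hr, hrK, hrr⟩ :=
    mem_tabDiag.1 (hc.natCast_mem_tabDiag_zero.2 (hK.resolve_right (not_not.2 hsucc)))
  rw [add_zero] at hrr
  have hrp : r < p :=
    ((hc.strictMonoOn_diag 0).lt_iff_lt (a := r) (b := p) ⟨hr, hrK⟩ ⟨hp, by omega⟩).1 <| by
      simp only [add_zero]
      omega
  -- The rows and columns of `c` force the entry of row `r` on diagonal `d + 1` to be `i`.
  have hlower := hc.row_le hr (q := r) (r := r + (d + 1)) le_rfl (by omega) (by omega)
  have hupper := hc.row_le hr (q := r + (d + 1)) (r := p + d) (by omega) (by omega) hpd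
  have hcol := hc.add_le_col hr hrp.le (q := p + d) (by omega) hpd
  exact hi (mem_tabDiag.2 ⟨r, hr, by omega, by omega⟩)

theorem IsKTab.exists_setRun_pred (hc : IsKTab K c) {i : ℕ} (hK : i ∈ K ∨ i + 1 ∉ K)
    (hi : (i : ℤ) ∉ tabDiag K c (d + 1)) (hi' : (i : ℤ) + 1 ∈ tabDiag K c d) :
    ∃ p e, 1 ≤ p ∧ e < d ∧ p + d ≤ K.card ∧ (∀ j ∈ Ioc e d, c p (p + j) = i + 1) ∧
      IsKTab K (setRun c p e d i) := by
  obtain ⟨p, hp, hpd, hcp⟩ := mem_tabDiag.1 hi'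
  have hstart : c p (p + 0) ≠ i + 1 := hc.apply_self_ne_succ hK hi hp hpd hcp
  set e := Nat.findGreatest (fun j ↦ c p (p + j) ≠ i + 1) d
  have hne : c p (p + e) ≠ i + 1 :=
    Nat.findGreatest_spec (P := fun j ↦ c p (p + j) ≠ i + 1) (Nat.zero_le d) hstart
  have hed : e < d := lt_of_le_of_ne (Nat.findGreatest_le d) fun h : e = d ↦ hne (by rw [h, hcp])
  have hrun : ∀ j ∈ Ioc e d, c p (p + j) = i + 1 := fun j hj ↦
    not_not.1 (Nat.findGreatest_is_greatest (mem_Ioc.1 hj).1 (mem_Ioc.1 hj).2)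
  refine ⟨p, e, hp, hed, hpd, hrun,
    hc.isKTab_setRun hp hpd ?_ (fun hright ↦ ?_) (fun r hr hrp ↦ ?_) ?_⟩
  · have hrow := hc.row_le hp (q := p + e) (r := p + d) (by omega) (by omega) hpd
    omega
  · have hrow := hc.2.1 p (p + d) hp (by omega) hright
    omega
  · have hcol := hc.add_le_col hr (q := p + d) (r := p) (by omega) (by omega) hpd
    have hne : c r (p + d) ≠ i := fun h ↦
      hi (mem_tabDiag.2 ⟨r, hr, by omega, by rw [← h]; congr 1; omega⟩)
    omega
  · have hcol := hc.2.2 p (p + (e + 1)) hp (by omega) (by omega)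
    rw [hrun (e + 1) (mem_Ioc.2 (by omega)), ← add_assoc] at hcol
    omega

end existence

/-! ### The operator `f̃_i^*` -/

section lfStar

variable {n : ℕ} {a : ℤ → ℤ → ℤ} {i : ℕ}

theorem isGreatest_epsStar (a : ℤ → ℤ → ℤ) (hi : i ≤ n) :
    IsGreatest (Astar n a i '' Set.Icc i n) (epsStar n a i) := by
  obtain ⟨m, hm⟩ := max_of_mem (mem_image_of_mem (Astar n a i) (left_mem_Icc.2 hi))
  have heps : epsStar n a i = m := by rw [epsStar, hm, WithBot.unbotD_coe]
  rw [heps, ← coe_Icc, ← coe_image]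
  exact ⟨mem_of_max hm, fun x hx ↦ le_max_of_eq hx hm⟩

theorem isLeast_lfStar (a : ℤ → ℤ → ℤ) (hi : i ≤ n) :
    IsLeast {l | (i ≤ l ∧ l ≤ n) ∧ Astar n a i l = epsStar n a i} (lfStar n a i) := by
  obtain ⟨l, hl, hAl⟩ := (isGreatest_epsStar a hi).1
  obtain ⟨m, hm⟩ := min_of_mem
    (mem_filter (p := fun l ↦ Astar n a i l = epsStar n a i).2 ⟨mem_Icc.2 hl, hAl⟩)
  have hlf : lfStar n a i = m := by rw [lfStar, hm, WithTop.untopD_coe]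
  rw [hlf]
  refine ⟨?_, fun x hx ↦ min_le_of_eq (mem_filter.2 ⟨mem_Icc.2 hx.1, hx.2⟩) hm⟩
  obtain ⟨hmem, hAm⟩ := mem_filter.1 (mem_of_min hm)
  exact ⟨mem_Icc.1 hmem, hAm⟩

theorem Astar_lt_of_lt_lfStar {l : ℕ} (hi : i ≤ n) (hil : i ≤ l) (hl : l < lfStar n a i) :
    Astar n a i l < Astar n a i (lfStar n a i) := by
  obtain ⟨⟨⟨-, hle⟩, hA⟩, hmin⟩ := isLeast_lfStar a hi
  have hln : l ≤ n := by omega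
  rw [hA]
  exact ((isGreatest_epsStar a hi).2 ⟨l, ⟨hil, hln⟩, rfl⟩).lt_of_ne fun h ↦
    hl.not_ge (hmin ⟨⟨hil, hln⟩, h⟩)

theorem Astar_succ (ha : IsLusztig n a) (i l : ℕ) :
    Astar n a i l = a i (l + 1) - a (i + 1) (l + 1 + 1) + Astar n a i (l + 1) := by
  unfold Astar
  rcases le_or_gt l n with hl | hl
  · rw [← insert_Icc_add_one_left_eq_Icc (by omega : l + 1 ≤ n + 1), sum_insert (by simp)]
    push_cast
    rfl
  · rw [Icc_eq_empty (by omega), Icc_eq_empty (by omega), ha.2 _ _ (by omega),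
      ha.2 _ _ (by omega)]
    simp

theorem sum_Ioc_eq_Astar_sub_Astar (ha : IsLusztig n a) (i : ℕ) {d e : ℕ} (hde : d ≤ e) :
    ∑ j ∈ Ioc d e, (a i (i + j) - a (i + 1) (i + 1 + j)) =
      Astar n a i (i + d) - Astar n a i (i + e) := by
  induction e, hde using Nat.le_induction with
  | base => simp
  | succ e hde ih =>
    rw [sum_Ioc_succ_top hde, ih, Astar_succ ha i (i + e)]
    push_cast
    ring_nf

theorem Astar_le_Astar_lfStar (ha : IsLusztig n a) (hi : i ≤ n) {l : ℕ} (hil : i ≤ l) :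
    Astar n a i l ≤ Astar n a i (lfStar n a i) := by
  have hle : ∀ m, i ≤ m → m ≤ n → Astar n a i m ≤ Astar n a i (lfStar n a i) :=
    fun m him hmn ↦ (isLeast_lfStar a hi).1.2 ▸
      (isGreatest_epsStar a hi).2 ⟨m, ⟨him, hmn⟩, rfl⟩
  rcases le_or_gt l n with hln | hln
  · exact hle l hil hln
  · have hzero : ∀ m, n < m → Astar n a i m = 0 := fun m hm ↦ by
      rw [Astar, Icc_eq_empty (by omega), sum_empty]
    -- `A_n = a_{i,n+1} ≥ 0`, so the value `0` beyond `n` is no competitor.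
    have hstep := Astar_succ ha i n
    rw [hzero (n + 1) n.lt_succ_self, ha.2 (i + 1) _ (by omega)] at hstep
    have hnonneg := ha.1 i (n + 1)
    have hn := hle n hi le_rfl
    rw [hzero l hln]
    omega

theorem pos_of_lt_lfStar (ha : IsLusztig n a) (hi : i ≤ n) (hlt : i < lfStar n a i) :
    0 < a (i + 1) (lfStar n a i + 1) := by
  obtain ⟨m, hm⟩ := Nat.exists_eq_add_of_lt hlt
  have hA := Astar_lt_of_lt_lfStar (a := a) hi (show i ≤ i + m by omega) (by omega)
  rw [Astar_succ ha, hm] at hA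
  have hnonneg := ha.1 i ((i + m : ℕ) + 1)
  rw [hm]
  push_cast at hA hnonneg ⊢
  omega

theorem isLusztig_ftilStar (ha : IsLusztig n a) (hi1 : 1 ≤ i) (hi : i ≤ n) :
    IsLusztig n (ftilStar n a i) := by
  obtain ⟨hil, hln⟩ := (isLeast_lfStar a hi).1.1
  refine ⟨fun k l ↦ ?_, fun k l hkl ↦ ?_⟩ <;> unfold ftilStar <;> split_ifs with hinc hdec
  · exact add_nonneg (ha.1 k l) zero_le_one
  · obtain ⟨rfl, rfl, hlt⟩ := hdec
    have hpos := pos_of_lt_lfStar ha hi (by exact_mod_cast hlt)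
    omega
  · exact ha.1 k l
  · omega
  · omega
  · exact ha.2 k l hkl

theorem ftilStar_eq_add_unitEntry (h : lfStar n a i = i) :
    ftilStar n a i = a + unitEntry i (i + 1) := by
  ext k l
  simp only [ftilStar, unitEntry, Pi.add_apply, h]
  split_ifs <;> omega

theorem ftilStar_eq_add_unitEntry_sub_unitEntry (h : i < lfStar n a i) :
    ftilStar n a i = a + unitEntry i (lfStar n a i + 1) - unitEntry (i + 1) (lfStar n a i + 1) := by
  ext k l
  simp only [ftilStar, unitEntry, Pi.add_apply, Pi.sub_apply]
  split_ifs <;> omega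

theorem IsKTab.tabCost_ftilStar {K : Finset ℕ} {c : ℕ → ℕ → ℤ} (hc : IsKTab K c) (hi1 : 1 ≤ i)
    {d : ℕ} (hd : lfStar n a i = i + d) :
    tabCost (ftilStar n a i) K c = tabCost a K c +
      (if (i : ℤ) ∈ tabDiag K c (d + 1) then 1 else 0) -
      (if (i : ℤ) + 1 ∈ tabDiag K c d then 1 else 0) := by
  have hinc := hc.tabCost_unitEntry hi1 (Nat.le_add_left 1 d)
  rcases Nat.eq_zero_or_pos d with rfl | hpos
  · have hdiag := hc.natCast_mem_tabDiag_zero (x := i + 1)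
    push_cast at hdiag
    simp only [zero_add, Nat.cast_one] at hinc
    simp only [ftilStar_eq_add_unitEntry hd, tabCost_add, hinc, hdiag, zero_add]
    ring
  · have hdec := hc.tabCost_unitEntry (Nat.le_add_left 1 i) hpos
    rw [ftilStar_eq_add_unitEntry_sub_unitEntry (by omega), tabCost_sub, tabCost_add, hd]
    rw [show i + 1 + d = i + (d + 1) by omega] at hdec
    push_cast [add_assoc, add_comm (1 : ℤ)] at hinc hdec ⊢
    rw [hinc, hdec]
    ring

end lfStar

/-! ### Comparison of minima -/

section comparison

variable {n : ℕ} {a : ℤ → ℤ → ℤ} {i : ℕ} {K : Finset ℕ} {c : ℕ → ℕ → ℤ}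

theorem IsKTab.exists_tabCost_ftilStar_le (hc : IsKTab K c) (ha : IsLusztig n a) (hi1 : 1 ≤ i)
    (hi : i ≤ n) :
    ∃ c', IsKTab K c' ∧ tabCost (ftilStar n a i) K c' ≤ tabCost a K c := by
  obtain ⟨d, hd⟩ := Nat.exists_eq_add_of_le (isLeast_lfStar a hi).1.1.1
  by_cases h : (i : ℤ) ∈ tabDiag K c (d + 1) ∧ (i : ℤ) + 1 ∉ tabDiag K c d
  · obtain ⟨p, e, hp, hde, he, hrun, hc'⟩ := hc.exists_setRun_succ h.1 h.2
    have hd' : d + 1 ∈ Ioc d e := mem_Ioc.2 ⟨d.lt_succ_self, hde⟩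
    have hgone := hc.notMem_tabDiag_setRun (v := i + 1) (by omega) hp (by omega) hd' (hrun _ hd')
    have hle := Astar_le_Astar_lfStar ha hi (show i ≤ i + e by omega)
    have hchange : ∑ j ∈ Ioc d e, (a (i + 1) (i + 1 + j) - a i (i + j)) =
        Astar n a i (i + e) - Astar n a i (lfStar n a i) := by
      rw [← neg_sub, hd, ← sum_Ioc_eq_Astar_sub_Astar ha i hde.le, ← sum_neg_distrib]
      simp only [neg_sub]
    refine ⟨_, hc', ?_⟩
    rw [hc'.tabCost_ftilStar hi1 hd, if_neg hgone, tabCost, tabCost, tabSum_setRun a hp he hrun,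
      hchange]
    split_ifs <;> omega
  · refine ⟨c, hc, ?_⟩
    rw [hc.tabCost_ftilStar hi1 hd]
    split_ifs <;> first | omega | tauto

theorem IsKTab.exists_tabCost_le_ftilStar (hc : IsKTab K c) (ha : IsLusztig n a) (hi1 : 1 ≤ i)
    (hi : i ≤ n) (hK : i ∈ K ∨ i + 1 ∉ K) :
    ∃ c', IsKTab K c' ∧ tabCost a K c' ≤ tabCost (ftilStar n a i) K c := by
  obtain ⟨d, hd⟩ := Nat.exists_eq_add_of_le (isLeast_lfStar a hi).1.1.1
  by_cases h : (i : ℤ) ∉ tabDiag K c (d + 1) ∧ (i : ℤ) + 1 ∈ tabDiag K c d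
  · obtain ⟨p, e, hp, hed, hpd, hrun, hc'⟩ := hc.exists_setRun_pred hK h.1 h.2
    refine ⟨_, hc', ?_⟩
    have hlt := Astar_lt_of_lt_lfStar (a := a) hi (show i ≤ i + e by omega) (by omega)
    rw [hc.tabCost_ftilStar hi1 hd, if_neg h.1, if_pos h.2, tabCost, tabCost,
      tabSum_setRun a hp hpd hrun, sum_Ioc_eq_Astar_sub_Astar ha i hed.le, ← hd]
    omega
  · refine ⟨c, hc, ?_⟩
    rw [hc.tabCost_ftilStar hi1 hd]
    split_ifs <;> first | omega | tauto

theorem MK_ftilStar_of_mem_or_succ_notMem (ha : IsLusztig n a) (hi1 : 1 ≤ i) (hi : i ≤ n)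
    (hK : i ∈ K ∨ i + 1 ∉ K) : MK n (ftilStar n a i) K = MK n a K := by
  have hf := isLusztig_ftilStar ha hi1 hi
  exact le_antisymm
    (MK_le_MK n hf.1 ha.1 fun _ hc ↦ hc.exists_tabCost_ftilStar_le ha hi1 hi)
    (MK_le_MK n ha.1 hf.1 fun _ hc ↦ hc.exists_tabCost_le_ftilStar ha hi1 hi hK)

theorem IsKTab.tabCost_ftilStar_Icc (hc : IsKTab (Icc (i + 1) (n + 1)) c) (hi1 : 1 ≤ i)
    (hi : i ≤ n) :
    tabCost (ftilStar n a i) (Icc (i + 1) (n + 1)) c =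
      tabCost a (Icc (i + 1) (n + 1)) c - 1 := by
  obtain ⟨hil, hln⟩ := (isLeast_lfStar a hi).1.1
  obtain ⟨d, hd⟩ := Nat.exists_eq_add_of_le hil
  have hcard : (Icc (i + 1) (n + 1)).card = n + 1 - i := by rw [Nat.card_Icc]; omega
  have hnotMem : (i : ℤ) ∉ tabDiag (Icc (i + 1) (n + 1)) c (d + 1) := fun h ↦ by
    obtain ⟨p, hp, hpd, hcp⟩ := mem_tabDiag.1 h
    rw [hc.eq_add_of_Icc hp (by omega) (by omega)] at hcp
    omega
  have hmem : (i : ℤ) + 1 ∈ tabDiag (Icc (i + 1) (n + 1)) c d :=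
    mem_tabDiag.2 ⟨1, le_rfl, by omega, hc.eq_add_of_Icc le_rfl (by omega) (by omega)⟩
  rw [hc.tabCost_ftilStar hi1 hd, if_neg hnotMem, if_pos hmem, add_zero]

theorem MK_ftilStar_Icc (ha : IsLusztig n a) (hi1 : 1 ≤ i) (hi : i ≤ n) :
    MK n (ftilStar n a i) (Icc (i + 1) (n + 1)) = MK n a (Icc (i + 1) (n + 1)) - 1 := by
  have hne : Icc (i + 1) (n + 1) ≠ ∅ := nonempty_iff_ne_empty.1 (nonempty_Icc.2 (by omega))
  have hne' : Icc (i + 1) (n + 1) ≠ Icc 1 (n + 1) := fun h ↦ by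
    have hmem : 1 ∈ Icc (i + 1) (n + 1) := h ▸ mem_Icc.2 (by omega)
    rw [mem_Icc] at hmem
    omega
  refine (isLeast_MK n (isLusztig_ftilStar ha hi1 hi).1 hne hne').unique ?_
  obtain ⟨⟨c, hc, hmin⟩, hle⟩ := isLeast_MK n ha.1 hne hne'
  refine ⟨⟨c, hc, by rw [hc.tabCost_ftilStar_Icc hi1 hi, hmin]⟩, ?_⟩
  rintro _ ⟨c', hc', rfl⟩
  rw [hc'.tabCost_ftilStar_Icc hi1 hi]
  exact sub_le_sub_right (hle ⟨c', hc', rfl⟩) 1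

end comparison

/-- for every Lusztig datum `a` and `1 ≤ i ≤ n`:
`M_K(f̃_i^* a) = M_K(a)` for every `K ∈ M_n^×` with `i ∈ K` or `i+1 ∉ K`, and
`M_{[i+1,n+1]}(f̃_i^* a) = M_{[i+1,n+1]}(a) − 1`.  (Hence `Ψ` intertwines `f̃_i^*` on `ℬ`
with the lowering Kashiwara operator on `e`-BZ data.) -/
theorem stmt14 (n : ℕ) (hn : 1 ≤ n) (a : ℤ → ℤ → ℤ) (ha : IsLusztig n a)
    (i : ℕ) (hi1 : 1 ≤ i) (hi2 : i ≤ n) :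
    (∀ K : Finset ℕ, K ⊆ Finset.Icc 1 (n + 1) → K ≠ ∅ → K ≠ Finset.Icc 1 (n + 1) →
      (i ∈ K ∨ i + 1 ∉ K) → MK n (ftilStar n a i) K = MK n a K) ∧
    MK n (ftilStar n a i) (Finset.Icc (i + 1) (n + 1)) =
      MK n a (Finset.Icc (i + 1) (n + 1)) - 1 := by
  constructor
  · exact fun _ _ _ _ hK ↦ MK_ftilStar_of_mem_or_succ_notMem ha hi1 hi2 hK
  · exact MK_ftilStar_Icc ha hi1 hi2
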